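/- Suppose α has an adjusted nearest integer expansion and let d_n^± be the quantities associated to γ_*. If σ ∈ {+1, −1} satisfies σ·d_i^+ < 0, ᾱ_i < 1/2, and it is not the case that a_{i+1} = 3 with ε_{i+1} = −1, then (1/4)·(1 − ᾱ_i + σ·d_i^−)·(1 + ε_{i+1}α_i + σ·d_i^+)/(1 + ε_{i+1}ᾱ_i α_i) > 1/24. -/

import Mathlib

open Filter Finset

attribute [local instance] Classical.propDecidable

/-- Distance from `x` to the nearest integer, `‖x‖`. -/
noncomputable def nint (x : ℝ) : ℝ := |x - round x|

/-- The two-sided inhomogeneous approximation constant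
`M(α,γ) = liminf_{|n|→∞} |n|·‖nα-γ‖`. -/
noncomputable def Mval (α γ : ℝ) : ℝ :=
  Filter.liminf (fun n : ℤ => (|n| : ℝ) * nint (n * α - γ)) Filter.cofinite

/-- Denominators `q_i` of a semi-regular continued fraction with partial quotients `a`
and signs `e`: `q_0 = 1`, `q_1 = a_1`, `q_i = a_i q_{i-1} + ε_i q_{i-2}`. -/
noncomputable def qs (a e : ℕ → ℤ) : ℕ → ℤ
  | 0 => 1
  | 1 => a 1
  | i + 2 => a (i + 2) * qs a e (i + 1) + e (i + 2) * qs a e i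

/-- Reversed tails `ᾱ_i = q_{i-1}/q_i` (with `ᾱ_0 = 0`). -/
noncomputable def ab (a e : ℕ → ℤ) (i : ℕ) : ℝ :=
  if i = 0 then 0 else (qs a e (i - 1) : ℝ) / (qs a e i : ℝ)

/-- An adjusted nearest integer expansion of `α`: a semi-regular continued fraction
`α = 1/(a_1 + ε_2/(a_2 + ε_3/(a_3 + ⋯)))` with tails `t i = α_i`, satisfying the
conditions (i)-(iv) of an adjusted expansion. -/
structure ANIE (α : ℝ) where
  /-- partial quotients `a_i` (for `i ≥ 1`) -/
  a : ℕ → ℤ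
  /-- signs `ε_i` -/
  e : ℕ → ℤ
  /-- tails: `t i = α_i`, `t 0 = α` -/
  t : ℕ → ℝ
  ha : ∀ i, 1 ≤ i → 2 ≤ a i
  he : ∀ i, e i = 1 ∨ e i = -1
  he1 : e 1 = 1
  ht0 : t 0 = α
  htpos : ∀ i, 0 < t i
  htlt1 : ∀ i, t i < 1
  hrec : ∀ i, t i = 1 / ((a (i + 1) : ℝ) + (e (i + 2) : ℝ) * t (i + 1))
  /-- condition (i): `a_i = 2` implies `ε_i = +1` or `ε_{i+1} = +1` -/
  hcond1 : ∀ i, 1 ≤ i → a i = 2 → e i = 1 ∨ e (i + 1) = 1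
  /-- condition (ii): if `a_i = 2`, `ε_i = -1` then `1/ᾱ_{i-1} - 1/α_i ≥ 1` -/
  hcond2 : ∀ i, 1 ≤ i → a i = 2 → e i = -1 → 1 / ab a e (i - 1) - 1 / t i ≥ 1
  /-- condition (iii): if `a_i = 2`, `ε_{i+1} = -1` then `1/α_i - 1/ᾱ_{i-1} > 1` -/
  hcond3 : ∀ i, 1 ≤ i → a i = 2 → e (i + 1) = -1 → 1 / t i - 1 / ab a e (i - 1) > 1
  /-- condition (iv): no block `2, (-3,)^k, -2` in the sequence `(ε_i a_i)` -/
  hcond4 : ∀ i k, 1 ≤ i →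
    ¬(e i * a i = 2 ∧ (∀ j, j < k → e (i + 1 + j) * a (i + 1 + j) = -3) ∧
        e (i + 1 + k) * a (i + 1 + k) = -2)

namespace ANIE

variable {α : ℝ}

/-- `D n = D_{n-1} = α_0 α_1 ⋯ α_{n-1}` (so `D 0 = 1`, `D 1 = α`). -/
noncomputable def D (E : ANIE α) (n : ℕ) : ℝ := ∏ j ∈ Finset.range n, E.t j

/-- The number of indices `1 ≤ k ≤ i` with `a_k` odd. -/
noncomputable def oddIdx (E : ANIE α) (i : ℕ) : ℕ :=
  ((Finset.Icc 1 i).filter fun k => Odd (E.a k)).card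

/-- `λ_i`: zero if `a_i` is even, `(-1)^j` if `a_i = a_{n_j}` is the `j`-th odd partial
quotient. -/
noncomputable def lam (E : ANIE α) (i : ℕ) : ℤ :=
  if Odd (E.a i) then (-1) ^ E.oddIdx i else 0

/-- `γ_* = Σ_{i≥1} (a_i - 1 + ε_i + λ_i)/2 · D_{i-1}`. -/
noncomputable def gammaStar (E : ANIE α) : ℝ :=
  ∑' k : ℕ,
    (((E.a (k + 1) : ℝ) - 1 + (E.e (k + 1) : ℝ) + (E.lam (k + 1) : ℝ)) / 2) * E.D (k + 1)

/-- `ᾱ_i = q_{i-1}/q_i`. -/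
noncomputable def abar (E : ANIE α) (i : ℕ) : ℝ := ab E.a E.e i

/-- `δ_i = -(-ε_1)(-ε_2)⋯(-ε_{i+1})`. -/
noncomputable def delta (E : ANIE α) (i : ℕ) : ℤ := -∏ j ∈ Finset.Icc 1 (i + 1), (-E.e j)

/-- `d_n^- = (Σ_{i=1}^n t_i δ_{i-1} q_{i-1}) / (δ_{n-1} q_n)` for `γ_*` (`t_i = λ_i`). -/
noncomputable def dminus (E : ANIE α) (n : ℕ) : ℝ :=
  (∑ i ∈ Finset.Icc 1 n, (E.lam i : ℝ) * (E.delta (i - 1) : ℝ) * (qs E.a E.e (i - 1) : ℝ)) /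
    ((E.delta (n - 1) : ℝ) * (qs E.a E.e n : ℝ))

/-- `d_n^+ = (Σ_{i=n+1}^∞ t_i D_{i-1}) / D_{n-1}` for `γ_*` (`t_i = λ_i`). -/
noncomputable def dplus (E : ANIE α) (n : ℕ) : ℝ :=
  (∑' k : ℕ, (E.lam (n + 1 + k) : ℝ) * E.D (n + 1 + k)) / E.D n

/-- `i ∈ S(γ_*)`: `|d_i^-| ≤ 1 - ᾱ_i` and `-(1-ε_{i+1}α_i) ≤ d_i^+ ≤ 1+ε_{i+1}α_i`. -/
def inS (E : ANIE α) (i : ℕ) : Prop :=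
  |E.dminus i| ≤ 1 - E.abar i ∧
    -(1 - (E.e (i + 1) : ℝ) * E.t i) ≤ E.dplus i ∧
      E.dplus i ≤ 1 + (E.e (i + 1) : ℝ) * E.t i

end ANIE

/-!
Write `b = ᾱ_i`, `t = α_i`, and let `s = (-1)^j`, where `j` counts the odd partial quotients up to
index `i`. The increments of `s` are the numbers `2 λ_{i+1}`, so Abel's inequality places `s d_i^+`
in `[-t, 0]`; hence `σ d_i^+ < 0` forces `σ = s`. The recursion
`d_i^- = ᾱ_i (λ_i - ε_i d_{i-1}^-)` then gives `1 - b + σ d_i^- ≥ 1/2`, except when `a_i = 2` and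
`ε_i = 1`, where only `2/7` is available but `b ≥ 1/3`. If `ε_{i+1} = -1` and `a_{i+1}` is `2` or
`4`, then `λ_{i+1} = 0` improves `σ d_i^+ ≥ -t` to `σ d_i^+ ≥ -α_i α_{i+1}`, which is what the
remaining factor needs; the bad combination `(ε_i a_i, ε_{i+1} a_{i+1}) = (2, -2)` is ruled out by
condition (iv).
-/

section Abel

variable {s w : ℕ → ℝ}

theorem abs_sum_range_sub_mul_add_le (hs : ∀ n, |s n| ≤ 1) (hw : Antitone w)
    (hw0 : ∀ n, 0 ≤ w n) (K : ℕ) :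
    |∑ k ∈ range K, (s (k + 1) - s k) * w k + s 0 * w 0| ≤ w 0 := by
  induction K generalizing s w with
  | zero =>
    rw [range_zero, sum_empty, zero_add, abs_mul, abs_of_nonneg (hw0 0)]
    exact mul_le_of_le_one_left (hw0 0) (hs 0)
  | succ K ih =>
    have htail := ih (s := fun k => s (k + 1)) (w := fun k => w (k + 1)) (fun n => hs _)
      (fun m n h => hw (by lia)) (fun n => hw0 _)
    have hdrop : 0 ≤ w 0 - w 1 := sub_nonneg.2 (hw zero_le_one)
    have hhead : |s 1 * (w 0 - w 1)| ≤ w 0 - w 1 := by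
      rw [abs_mul, abs_of_nonneg hdrop]
      exact mul_le_of_le_one_left hdrop (hs 1)
    rw [sum_range_succ']
    calc |∑ k ∈ range K, (s (k + 1 + 1) - s (k + 1)) * w (k + 1) + (s (0 + 1) - s 0) * w 0
            + s 0 * w 0|
        = |(∑ k ∈ range K, (s (k + 1 + 1) - s (k + 1)) * w (k + 1) + s 1 * w 1)
            + s 1 * (w 0 - w 1)| := by ring_nf
      _ ≤ w 1 + (w 0 - w 1) := (abs_add_le _ _).trans (add_le_add htail hhead)
      _ = w 0 := by ring

theorem abs_tsum_sub_mul_add_le (hs : ∀ n, |s n| ≤ 1) (hw : Antitone w) (hw0 : ∀ n, 0 ≤ w n)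
    (hsum : Summable fun k => (s (k + 1) - s k) * w k) :
    |∑' k, (s (k + 1) - s k) * w k + s 0 * w 0| ≤ w 0 :=
  le_of_tendsto' (hsum.hasSum.tendsto_sum_nat.add_const _).abs
    (abs_sum_range_sub_mul_add_le hs hw hw0)

end Abel

section Denominators

variable {a e : ℕ → ℤ}

theorem qs_pos_and_lt_succ (ha : ∀ i, 1 ≤ i → 2 ≤ a i) (he : ∀ i, -1 ≤ e i) (n : ℕ) :
    0 < qs a e n ∧ qs a e n < qs a e (n + 1) := by
  induction n with
  | zero => exact ⟨one_pos, ha 1 le_rfl⟩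
  | succ n ih =>
    refine ⟨ih.1.trans ih.2, ?_⟩
    have ha' := ha (n + 2) (by lia)
    have he' := he (n + 2)
    simp only [qs]
    nlinarith

theorem ab_zero : ab a e 0 = 0 := if_pos rfl

theorem ab_succ (n : ℕ) : ab a e (n + 1) = (qs a e n : ℝ) / qs a e (n + 1) :=
  if_neg n.succ_ne_zero

theorem ab_succ_pos (ha : ∀ i, 1 ≤ i → 2 ≤ a i) (he : ∀ i, -1 ≤ e i) (n : ℕ) :
    0 < ab a e (n + 1) := by
  rw [ab_succ]
  exact div_pos (Int.cast_pos.2 (qs_pos_and_lt_succ ha he n).1)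
    (Int.cast_pos.2 (qs_pos_and_lt_succ ha he (n + 1)).1)

theorem ab_nonneg (ha : ∀ i, 1 ≤ i → 2 ≤ a i) (he : ∀ i, -1 ≤ e i) : ∀ n, 0 ≤ ab a e n
  | 0 => ab_zero.ge
  | n + 1 => (ab_succ_pos ha he n).le

theorem ab_succ_mul (ha : ∀ i, 1 ≤ i → 2 ≤ a i) (he : ∀ i, -1 ≤ e i) (n : ℕ) :
    ab a e (n + 1) * (a (n + 1) + e (n + 1) * ab a e n) = 1 := by
  have hq : ∀ m, (qs a e m : ℝ) ≠ 0 := fun m =>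
    Int.cast_ne_zero.2 (qs_pos_and_lt_succ ha he m).1.ne'
  rw [ab_succ, div_mul_eq_mul_div, div_eq_one_iff_eq (hq _)]
  cases n with
  | zero => rw [ab_zero, mul_zero, add_zero, qs, qs, Int.cast_one, one_mul]
  | succ n =>
    rw [ab_succ, mul_add, mul_left_comm, mul_div_cancel₀ _ (hq (n + 1)), qs]
    push_cast
    ring

end Denominators

theorem one_div_twentyfour_lt {A B den c : ℝ} (hc : 0 < c) (hA : c ≤ A) (hden : 0 < den)
    (hB : den < 6 * c * B) : 1 / 24 < 1 / 4 * A * (B / den) := by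
  have hquot : 1 < 6 * c * (B / den) := by rwa [← mul_div_assoc, one_lt_div hden]
  have hquot_pos : 0 < B / den := pos_of_mul_pos_right (one_pos.trans hquot) (by positivity)
  have := mul_le_mul_of_nonneg_right hA hquot_pos.le
  linarith

namespace ANIE

variable {α : ℝ} (E : ANIE α)

section Tails

theorem neg_one_le_e (i : ℕ) : -1 ≤ E.e i := by
  rcases E.he i with h | h <;> lia

theorem abs_e (i : ℕ) : |(E.e i : ℝ)| = 1 := by
  rcases E.he i with h | h <;> simp [h]

theorem two_le_a_cast (i : ℕ) : (2 : ℝ) ≤ E.a (i + 1) := mod_cast E.ha (i + 1) (by lia)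

theorem neg_le_e_mul (i : ℕ) {x : ℝ} (hx : 0 ≤ x) : -x ≤ E.e i * x := by
  have h : (-1 : ℝ) ≤ E.e i := mod_cast E.neg_one_le_e i
  simpa using mul_le_mul_of_nonneg_right h hx

theorem t_mul (i : ℕ) : E.t i * (E.a (i + 1) + E.e (i + 2) * E.t (i + 1)) = 1 := by
  have h := E.hrec i
  have hden : (E.a (i + 1) : ℝ) + E.e (i + 2) * E.t (i + 1) ≠ 0 := fun h0 =>
    (E.htpos i).ne' (by rw [h, h0, div_zero])
  rw [h, one_div_mul_cancel hden]

theorem e_add_two_eq_one {i : ℕ} (he : E.e (i + 1) = -1) (ha : E.a (i + 1) = 2) :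
    E.e (i + 2) = 1 :=
  (E.hcond1 (i + 1) (by lia) ha).resolve_left (by lia)

theorem t_le_half {i : ℕ} (he : E.e (i + 1) = -1) : E.t i ≤ 1 / 2 := by
  rw [E.hrec i]
  refine one_div_le_one_div_of_le two_pos ?_
  rcases (E.ha (i + 1) (by lia)).eq_or_lt with ha | ha
  · rw [E.e_add_two_eq_one he ha.symm, ← ha]
    push_cast
    linarith [E.htpos (i + 1)]
  · have h3 : (3 : ℝ) ≤ E.a (i + 1) := mod_cast ha
    linarith [E.neg_le_e_mul (i + 2) (E.htpos (i + 1)).le, E.htlt1 (i + 1)]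

theorem t_le_two_thirds (i : ℕ) : E.t i ≤ 2 / 3 := by
  rw [E.hrec i, ← one_div_div 3 2]
  refine one_div_le_one_div_of_le (by norm_num) ?_
  have ha := E.two_le_a_cast i
  rcases E.he (i + 2) with he | he
  · rw [he]
    push_cast
    linarith [E.htpos (i + 1)]
  · rw [he]
    push_cast
    linarith [E.t_le_half he]

theorem D_pos (n : ℕ) : 0 < E.D n := prod_pos fun j _ => E.htpos j

theorem D_succ (n : ℕ) : E.D (n + 1) = E.D n * E.t n := prod_range_succ _ _

theorem antitone_D : Antitone E.D :=
  antitone_nat_of_succ_le fun n => by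
    rw [D_succ]
    exact mul_le_of_le_one_right (E.D_pos n).le (E.htlt1 n).le

theorem summable_D : Summable E.D := by
  refine .of_nonneg_of_le (fun n => (E.D_pos n).le) (fun n => ?_)
    (summable_geometric_of_lt_one (r := 2 / 3) (by norm_num) (by norm_num))
  calc E.D n ≤ ∏ _j ∈ range n, (2 / 3 : ℝ) :=
        prod_le_prod (fun j _ => (E.htpos j).le) fun j _ => E.t_le_two_thirds j
    _ = (2 / 3) ^ n := by rw [prod_const, card_range]

theorem abar_nonneg (n : ℕ) : 0 ≤ E.abar n := ab_nonneg E.ha E.neg_one_le_e n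

theorem abar_succ_pos (n : ℕ) : 0 < E.abar (n + 1) := ab_succ_pos E.ha E.neg_one_le_e n

theorem abar_succ_mul (n : ℕ) :
    E.abar (n + 1) * (E.a (n + 1) + E.e (n + 1) * E.abar n) = 1 :=
  ab_succ_mul E.ha E.neg_one_le_e n

theorem abar_succ_mul_le {n : ℕ} {c y : ℝ} (h : y ≤ c * (E.a (n + 1) - E.abar n)) (hc : 0 ≤ c) :
    E.abar (n + 1) * y ≤ c := by
  have hden : y ≤ c * (E.a (n + 1) + E.e (n + 1) * E.abar n) :=
    h.trans (mul_le_mul_of_nonneg_left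
      (by linarith [E.neg_le_e_mul (n + 1) (E.abar_nonneg n)]) hc)
  calc E.abar (n + 1) * y
      ≤ E.abar (n + 1) * (c * (E.a (n + 1) + E.e (n + 1) * E.abar n)) :=
        mul_le_mul_of_nonneg_left hden (E.abar_succ_pos n).le
    _ = c := by rw [mul_left_comm, E.abar_succ_mul, mul_one]

end Tails

section Signs

/-- The sign `(-1)^j`, where `j` is the number of odd partial quotients among `a_1, …, a_n`. It is
the last nonzero `λ_i` with `i ≤ n` (and `1` if there is none), and turns the definition of `λ` into
`2 λ_{n+1} = sg (n + 1) - sg n`. -/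
noncomputable def sg (n : ℕ) : ℝ := (-1) ^ E.oddIdx n

theorem sg_eq_or (n : ℕ) : E.sg n = 1 ∨ E.sg n = -1 := neg_one_pow_eq_or ℝ _

theorem abs_sg (n : ℕ) : |E.sg n| = 1 := abs_neg_one_pow _

theorem sg_mul_self (n : ℕ) : E.sg n * E.sg n = 1 := by
  rw [← abs_mul_abs_self, abs_sg, one_mul]

theorem lam_of_odd {n : ℕ} (h : Odd (E.a n)) : (E.lam n : ℝ) = E.sg n := by
  simp [lam, sg, h]

theorem lam_of_even {n : ℕ} (h : Even (E.a n)) : (E.lam n : ℝ) = 0 := by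
  simp [lam, Int.not_odd_iff_even.2 h]

theorem oddIdx_succ (n : ℕ) :
    E.oddIdx (n + 1) = E.oddIdx n + if Odd (E.a (n + 1)) then 1 else 0 := by
  unfold oddIdx
  rw [← insert_Icc_right_eq_Icc_add_one (by lia), filter_insert]
  split_ifs
  · exact card_insert_of_notMem (by simp)
  · rfl

theorem two_mul_lam_succ (n : ℕ) : 2 * (E.lam (n + 1) : ℝ) = E.sg (n + 1) - E.sg n := by
  rcases Int.even_or_odd (E.a (n + 1)) with h | h
  · rw [lam_of_even E h, sg, sg, oddIdx_succ, if_neg (Int.not_odd_iff_even.2 h)]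
    ring
  · rw [lam_of_odd E h, sg, sg, oddIdx_succ, if_pos h]
    ring

theorem abs_lam_le_one (n : ℕ) : |(E.lam n : ℝ)| ≤ 1 := by
  rcases Int.even_or_odd (E.a n) with h | h
  · simp [E.lam_of_even h]
  · rw [E.lam_of_odd h, abs_sg]

theorem abs_lam_succ_le (n : ℕ) : |(E.lam (n + 1) : ℝ)| ≤ E.a (n + 1) - 2 := by
  rcases Int.even_or_odd (E.a (n + 1)) with h | h
  · rw [E.lam_of_even h, abs_zero]
    exact sub_nonneg.2 (E.two_le_a_cast n)
  · have h3 : (3 : ℝ) ≤ E.a (n + 1) := by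
      have := E.ha (n + 1) (by lia)
      obtain ⟨m, hm⟩ := h
      exact_mod_cast (by lia : 3 ≤ E.a (n + 1))
    linarith [E.abs_lam_le_one (n + 1)]

end Signs

section ForwardSums

theorem summable_lam_mul_D : Summable fun n => (E.lam n : ℝ) * E.D n := by
  refine .of_norm_bounded E.summable_D fun n => ?_
  rw [Real.norm_eq_abs, abs_mul, abs_of_pos (E.D_pos n)]
  exact mul_le_of_le_one_left (E.D_pos n).le (E.abs_lam_le_one n)

theorem summable_lam_mul_D_add (n : ℕ) :
    Summable fun k => (E.lam (n + k) : ℝ) * E.D (n + k) :=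
  E.summable_lam_mul_D.comp_injective (add_right_injective n)

theorem dplus_eq_mul (n : ℕ) : E.dplus n = E.t n * (E.lam (n + 1) + E.dplus (n + 1)) := by
  have hD := (E.D_pos n).ne'
  have ht := (E.htpos n).ne'
  have hshift : ∑' k, (E.lam (n + 1 + (k + 1)) : ℝ) * E.D (n + 1 + (k + 1)) =
      ∑' k, (E.lam (n + 1 + 1 + k) : ℝ) * E.D (n + 1 + 1 + k) :=
    tsum_congr fun k => by rw [add_left_comm, add_comm k]
  unfold dplus
  rw [(E.summable_lam_mul_D_add (n + 1)).tsum_eq_zero_add, hshift, add_zero, D_succ]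
  field_simp

theorem abs_two_mul_dplus_add_le (n : ℕ) : |2 * E.dplus n + E.sg n * E.t n| ≤ E.t n := by
  have hD := E.D_pos n
  have hterm (k : ℕ) : (E.sg (n + (k + 1)) - E.sg (n + k)) * E.D (n + 1 + k) =
      2 * (E.lam (n + 1 + k) * E.D (n + 1 + k)) := by
    rw [← add_assoc, ← two_mul_lam_succ, mul_assoc, add_right_comm]
  have habel := abs_tsum_sub_mul_add_le (s := fun k => E.sg (n + k))
    (w := fun k => E.D (n + 1 + k)) (fun k => (E.abs_sg _).le)
    (fun k l h => E.antitone_D (by lia)) (fun k => (E.D_pos _).le)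
    (by simpa only [hterm] using (E.summable_lam_mul_D_add (n + 1)).mul_left 2)
  have hsum : ∑' k, (E.lam (n + 1 + k) : ℝ) * E.D (n + 1 + k) = E.D n * E.dplus n :=
    (mul_div_cancel₀ _ hD.ne').symm
  simp only [hterm, tsum_mul_left, hsum, add_zero, D_succ] at habel
  rw [show 2 * (E.D n * E.dplus n) + E.sg n * (E.D n * E.t n) =
    E.D n * (2 * E.dplus n + E.sg n * E.t n) by ring, abs_mul, abs_of_pos hD] at habel
  exact le_of_mul_le_mul_left habel hD

theorem sg_mul_dplus_mem_Icc (n : ℕ) : E.sg n * E.dplus n ∈ Set.Icc (-E.t n) 0 := by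
  obtain ⟨hlow, hupp⟩ := abs_le.1 (E.abs_two_mul_dplus_add_le n)
  rcases E.sg_eq_or n with h | h <;> rw [h] at hlow hupp ⊢ <;> constructor <;> linarith

theorem neg_mul_le_sg_mul_dplus {n : ℕ} (h : Even (E.a (n + 1))) :
    -(E.t n * E.t (n + 1)) ≤ E.sg n * E.dplus n := by
  have hsg : E.sg n = E.sg (n + 1) := by linarith [E.two_mul_lam_succ n, E.lam_of_even h]
  rw [hsg, dplus_eq_mul, E.lam_of_even h, zero_add, mul_left_comm, ← mul_neg]
  exact mul_le_mul_of_nonneg_left (E.sg_mul_dplus_mem_Icc (n + 1)).1 (E.htpos n).le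

theorem eq_sg_of_mul_dplus_neg {n : ℕ} {σ : ℝ} (hσ : σ = 1 ∨ σ = -1) (h : σ * E.dplus n < 0) :
    σ = E.sg n := by
  have hsg := (E.sg_mul_dplus_mem_Icc n).2
  rcases hσ with rfl | rfl <;> rcases E.sg_eq_or n with h' | h' <;> rw [h'] at hsg ⊢ <;> linarith

end ForwardSums

section BackwardSums

theorem abar_zero : E.abar 0 = 0 := ab_zero

theorem dminus_zero : E.dminus 0 = 0 := by simp [dminus]

theorem delta_succ (n : ℕ) : E.delta (n + 1) = -E.delta n * E.e (n + 2) := by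
  unfold delta
  rw [prod_Icc_succ_top (by lia)]
  ring

theorem delta_ne_zero (n : ℕ) : E.delta n ≠ 0 :=
  neg_ne_zero.2 <| prod_ne_zero_iff.2 fun j _ => by rcases E.he j with h | h <;> simp [h]

theorem dminus_succ (n : ℕ) :
    E.dminus (n + 1) = E.abar (n + 1) * (E.lam (n + 1) - E.e (n + 1) * E.dminus n) := by
  have hδ : ∀ m, (E.delta m : ℝ) ≠ 0 := fun m => Int.cast_ne_zero.2 (E.delta_ne_zero m)
  have hq : ∀ m, (qs E.a E.e m : ℝ) ≠ 0 := fun m =>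
    Int.cast_ne_zero.2 (qs_pos_and_lt_succ E.ha E.neg_one_le_e m).1.ne'
  rw [abar, ab_succ]
  cases n with
  | zero =>
    rw [dminus_zero, dminus, zero_add, Icc_self, sum_singleton, Nat.sub_self]
    field_simp [hδ 0, hq 1]
    ring
  | succ n =>
    unfold dminus
    rw [sum_Icc_succ_top (by lia)]
    simp only [Nat.add_sub_cancel, delta_succ]
    rcases E.he (n + 2) with h | h <;> rw [h] <;> push_cast <;>
      field_simp [hδ n, hq (n + 1), hq (n + 2)] <;> ring

theorem abs_dminus_succ_le (n : ℕ) :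
    |E.dminus (n + 1)| ≤ E.abar (n + 1) * (|(E.lam (n + 1) : ℝ)| + |E.dminus n|) := by
  rw [dminus_succ, abs_mul, abs_of_pos (E.abar_succ_pos n)]
  refine mul_le_mul_of_nonneg_left ((abs_sub _ _).trans_eq ?_) (E.abar_succ_pos n).le
  rw [abs_mul, abs_e, one_mul]

theorem abs_dminus_le (n : ℕ) : |E.dminus n| ≤ 1 - E.abar n := by
  induction n with
  | zero => simp [dminus_zero, abar_zero]
  | succ n ih =>
    have hmul : E.abar (n + 1) * (|(E.lam (n + 1) : ℝ)| + |E.dminus n| + 1) ≤ 1 :=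
      E.abar_succ_mul_le (by linarith [E.abs_lam_succ_le n]) zero_le_one
    linarith [E.abs_dminus_succ_le n]

theorem abs_dminus_le_two_mul : ∀ n, |E.dminus n| ≤ 2 * E.abar n
  | 0 => by simp [dminus_zero, abar_zero]
  | n + 1 => by
    have hsum : |(E.lam (n + 1) : ℝ)| + |E.dminus n| ≤ 2 := by
      linarith [E.abs_lam_le_one (n + 1), E.abs_dminus_le n, E.abar_nonneg n]
    linarith [E.abs_dminus_succ_le n, mul_le_mul_of_nonneg_left hsum (E.abar_succ_pos n).le]

end BackwardSums

section BackwardFactor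

/-- The factor `1 - ᾱ_i + σ d_i^-` of the quantity to be bounded, at `σ = sg i`. -/
noncomputable def backwardFactor (i : ℕ) : ℝ := 1 - E.abar i + E.sg i * E.dminus i

theorem backwardFactor_zero : E.backwardFactor 0 = 1 := by
  rw [backwardFactor, abar_zero, dminus_zero, sub_zero, mul_zero, add_zero]

theorem backwardFactor_succ (n : ℕ) :
    E.backwardFactor (n + 1) = 1 - E.abar (n + 1) *
      (1 - E.sg (n + 1) * E.lam (n + 1) + E.e (n + 1) * (E.sg (n + 1) * E.dminus n)) := by
  rw [backwardFactor, dminus_succ]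
  ring

theorem e_mul_sg_mul_le_abs (i j : ℕ) (x : ℝ) : E.e i * (E.sg j * x) ≤ |x| :=
  (le_abs_self _).trans_eq (by rw [abs_mul, abs_mul, abs_e, abs_sg, one_mul, one_mul])

theorem half_le_backwardFactor_of_odd {n : ℕ} (ha : Odd (E.a (n + 1)))
    (hb : E.abar (n + 1) ≤ 1 / 2) : 1 / 2 ≤ E.backwardFactor (n + 1) := by
  have hx : E.e (n + 1) * (E.sg (n + 1) * E.dminus n) ≤ 1 := by
    linarith [E.e_mul_sg_mul_le_abs (n + 1) (n + 1) (E.dminus n), E.abs_dminus_le n,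
      E.abar_nonneg n]
  rw [backwardFactor_succ, E.lam_of_odd ha, sg_mul_self, sub_self, zero_add]
  linarith [mul_le_of_le_one_right (E.abar_nonneg (n + 1)) hx]

theorem half_le_backwardFactor_of_even {n : ℕ} (ha : Even (E.a (n + 1)))
    (h4 : 4 ≤ E.a (n + 1)) : 1 / 2 ≤ E.backwardFactor (n + 1) := by
  have h4' : (4 : ℝ) ≤ E.a (n + 1) := mod_cast h4
  have hle : 1 + E.e (n + 1) * (E.sg (n + 1) * E.dminus n) ≤
      1 / 2 * (E.a (n + 1) - E.abar n) := by
    linarith [E.e_mul_sg_mul_le_abs (n + 1) (n + 1) (E.dminus n), E.abs_dminus_le n,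
      E.abar_nonneg n]
  rw [backwardFactor_succ, E.lam_of_even ha, mul_zero, sub_zero]
  linarith [E.abar_succ_mul_le hle (by norm_num)]

theorem two_sevenths_le_backwardFactor {n : ℕ} (ha : E.a (n + 1) = 2) (he : E.e (n + 1) = 1) :
    2 / 7 ≤ E.backwardFactor (n + 1) := by
  -- Averaging `|d_n^-| ≤ 1 - ᾱ_n` and `|d_n^-| ≤ 2 ᾱ_n` with weights `3/7` and `4/7`.
  have hle : 1 + E.e (n + 1) * (E.sg (n + 1) * E.dminus n) ≤ 5 / 7 * (2 + E.abar n) := by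
    linarith [E.e_mul_sg_mul_le_abs (n + 1) (n + 1) (E.dminus n), E.abs_dminus_le n,
      E.abs_dminus_le_two_mul n]
  have hmul := E.abar_succ_mul n
  rw [ha, he, Int.cast_one, one_mul, Int.cast_ofNat] at hmul
  rw [backwardFactor_succ, E.lam_of_even (ha ▸ even_two), mul_zero, sub_zero]
  linarith [mul_le_mul_of_nonneg_left hle (E.abar_succ_pos n).le]

theorem e_eq_one_of_a_eq_two {n : ℕ} (ha : E.a (n + 1) = 2) (hb : E.abar (n + 1) < 1 / 2) :
    E.e (n + 1) = 1 := by
  refine (E.he (n + 1)).resolve_right fun he => ?_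
  have hmul := E.abar_succ_mul n
  rw [ha, he] at hmul
  push_cast at hmul
  linarith [mul_nonneg (E.abar_succ_pos n).le (E.abar_nonneg n)]

theorem third_le_abar_of_a_eq_two {n : ℕ} (ha : E.a (n + 1) = 2) : 1 / 3 ≤ E.abar (n + 1) := by
  have hmul := E.abar_succ_mul n
  have hle : E.e (n + 1) * E.abar n ≤ 1 := by
    rcases E.he (n + 1) with he | he <;> rw [he] <;> push_cast <;>
      linarith [E.abs_dminus_le n, abs_nonneg (E.dminus n), E.abar_nonneg n]
  rw [ha] at hmul
  push_cast at hmul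
  linarith [mul_le_of_le_one_right (E.abar_succ_pos n).le hle]

theorem half_le_backwardFactor_or {i : ℕ} (hb : E.abar i < 1 / 2) :
    1 / 2 ≤ E.backwardFactor i ∨ ∃ n, i = n + 1 ∧ E.a (n + 1) = 2 ∧ E.e (n + 1) = 1 := by
  cases i with
  | zero => exact .inl (one_half_lt_one.le.trans_eq E.backwardFactor_zero.symm)
  | succ n =>
    rcases Int.even_or_odd (E.a (n + 1)) with heven | hodd
    · rcases (E.ha (n + 1) (by lia)).eq_or_lt with h2 | hgt
      · exact .inr ⟨n, rfl, h2.symm, E.e_eq_one_of_a_eq_two h2.symm hb⟩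
      · exact .inl (E.half_le_backwardFactor_of_even heven (by obtain ⟨m, hm⟩ := heven; lia))
    · exact .inl (E.half_le_backwardFactor_of_odd hodd hb.le)

end BackwardFactor

section ForwardFactor

/-- The factor `1 + ε_{i+1} α_i + σ d_i^+` of the quantity to be bounded, at `σ = sg i`. -/
noncomputable def forwardFactor (i : ℕ) : ℝ := 1 + E.e (i + 1) * E.t i + E.sg i * E.dplus i

theorem one_le_forwardFactor {i : ℕ} (he : E.e (i + 1) = 1) : 1 ≤ E.forwardFactor i := by
  rw [forwardFactor, he, Int.cast_one, one_mul]
  linarith [(E.sg_mul_dplus_mem_Icc i).1]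

theorem forwardFactor_of_e_eq_neg_one {i : ℕ} (he : E.e (i + 1) = -1) :
    E.forwardFactor i = 1 - E.t i + E.sg i * E.dplus i := by
  rw [forwardFactor, he]
  push_cast
  ring

theorem one_lt_three_mul_forwardFactor {i : ℕ} (he : E.e (i + 1) = -1) (ha : E.a (i + 1) = 2) :
    1 < 3 * E.forwardFactor i := by
  have hmul := E.t_mul i
  rw [ha, E.e_add_two_eq_one he ha] at hmul
  push_cast at hmul
  have hd := E.neg_mul_le_sg_mul_dplus (n := i) (ha ▸ even_two)
  have htt : E.t i * E.t (i + 1) < E.t i :=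
    mul_lt_of_lt_one_right (E.htpos i) (E.htlt1 (i + 1))
  rw [E.forwardFactor_of_e_eq_neg_one he]
  linarith

theorem lt_twelve_mul_forwardFactor_of_a_eq_four {i : ℕ} (he : E.e (i + 1) = -1)
    (ha : E.a (i + 1) = 4) : 7 * (1 - E.t i / 3) < 12 * E.forwardFactor i := by
  have hmul := E.t_mul i
  rw [ha] at hmul
  push_cast at hmul
  have hd := E.neg_mul_le_sg_mul_dplus (n := i) (ha ▸ (by decide))
  rw [E.forwardFactor_of_e_eq_neg_one he]
  rcases E.he (i + 2) with he' | he' <;> rw [he'] at hmul <;> push_cast at hmul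
  · have htt : E.t i * E.t (i + 1) < E.t i :=
      mul_lt_of_lt_one_right (E.htpos i) (E.htlt1 (i + 1))
    linarith
  · have htt := mul_le_mul_of_nonneg_left (E.t_le_half he') (E.htpos i).le
    linarith

theorem lt_twelve_mul_forwardFactor_of_five_le {i : ℕ} (he : E.e (i + 1) = -1)
    (ha : 5 ≤ E.a (i + 1)) : 7 * (1 - E.t i / 3) < 12 * E.forwardFactor i := by
  have h5 : (5 : ℝ) ≤ E.a (i + 1) := mod_cast ha
  have hden : (9 / 2 : ℝ) ≤ E.a (i + 1) + E.e (i + 2) * E.t (i + 1) := by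
    rcases E.he (i + 2) with he' | he' <;> rw [he'] <;> push_cast
    · linarith [E.htpos (i + 1)]
    · linarith [E.t_le_half he']
  have ht : E.t i * (9 / 2) ≤ 1 :=
    (mul_le_mul_of_nonneg_left hden (E.htpos i).le).trans_eq (E.t_mul i)
  rw [E.forwardFactor_of_e_eq_neg_one he]
  linarith [(E.sg_mul_dplus_mem_Icc i).1]

theorem lt_twelve_mul_forwardFactor_of_four_le {i : ℕ} (he : E.e (i + 1) = -1)
    (ha : 4 ≤ E.a (i + 1)) : 7 * (1 - E.t i / 3) < 12 * E.forwardFactor i :=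
  ha.eq_or_lt.elim (fun h => E.lt_twelve_mul_forwardFactor_of_a_eq_four he h.symm)
    (E.lt_twelve_mul_forwardFactor_of_five_le he)

theorem abar_mul_t_nonneg (i : ℕ) : 0 ≤ E.abar i * E.t i :=
  mul_nonneg (E.abar_nonneg i) (E.htpos i).le

theorem abar_mul_t_lt_half {i : ℕ} (hb : E.abar i < 1 / 2) : E.abar i * E.t i < 1 / 2 :=
  (mul_le_of_le_one_right (E.abar_nonneg i) (E.htlt1 i).le).trans_lt hb

theorem one_add_e_mul_pos {i : ℕ} (hb : E.abar i < 1 / 2) :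
    0 < 1 + (E.e (i + 1) : ℝ) * E.abar i * E.t i := by
  rw [mul_assoc]
  linarith [E.neg_le_e_mul (i + 1) (E.abar_mul_t_nonneg i), E.abar_mul_t_lt_half hb]

theorem one_add_e_mul_lt_three_mul_forwardFactor {i : ℕ} (hb : E.abar i < 1 / 2)
    (h3 : E.e (i + 1) = -1 → E.a (i + 1) ≠ 3) :
    1 + (E.e (i + 1) : ℝ) * E.abar i * E.t i < 3 * E.forwardFactor i := by
  rcases E.he (i + 1) with he | he
  · rw [he, Int.cast_one, one_mul]
    linarith [E.abar_mul_t_lt_half hb, E.one_le_forwardFactor he]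
  · suffices 1 < 3 * E.forwardFactor i by
      rw [he]
      push_cast
      linarith [E.abar_mul_t_nonneg i]
    rcases (E.ha (i + 1) (by lia)).eq_or_lt with h2 | hgt
    · exact E.one_lt_three_mul_forwardFactor he h2.symm
    · have h4 : 4 ≤ E.a (i + 1) := by
        have := h3 he
        lia
      linarith [E.lt_twelve_mul_forwardFactor_of_four_le he h4, E.htlt1 i]

theorem seven_mul_one_add_e_mul_lt {i : ℕ} (hb : E.abar i < 1 / 2) (hb3 : 1 / 3 ≤ E.abar i)
    (h4 : E.e (i + 1) = -1 → 4 ≤ E.a (i + 1)) :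
    7 * (1 + (E.e (i + 1) : ℝ) * E.abar i * E.t i) < 12 * E.forwardFactor i := by
  rcases E.he (i + 1) with he | he <;> rw [he] <;> push_cast
  · linarith [E.abar_mul_t_lt_half hb, E.one_le_forwardFactor he]
  · linarith [mul_le_mul_of_nonneg_right hb3 (E.htpos i).le,
      E.lt_twelve_mul_forwardFactor_of_four_le he (h4 he)]

end ForwardFactor

theorem a_succ_ne_two {i : ℕ} (hi : 1 ≤ i) (ha : E.a i = 2) (he : E.e i = 1)
    (he' : E.e (i + 1) = -1) : E.a (i + 1) ≠ 2 := fun h2 =>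
  E.hcond4 i 0 hi ⟨by simp [ha, he], by simp, by simp [h2, he']⟩

end ANIE

theorem stmt14_general {α : ℝ} (E : ANIE α) (i : ℕ) (σ : ℝ) (hσ : σ = 1 ∨ σ = -1)
    (hdp : σ * E.dplus i < 0) (habar : E.abar i < 1 / 2)
    (h : ¬(E.a (i + 1) = 3 ∧ E.e (i + 1) = -1)) :
    1 / 4 * (1 - E.abar i + σ * E.dminus i) *
        ((1 + (E.e (i + 1) : ℝ) * E.t i + σ * E.dplus i) /
          (1 + (E.e (i + 1) : ℝ) * E.abar i * E.t i)) > 1 / 24 := by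
  obtain rfl := E.eq_sg_of_mul_dplus_neg hσ hdp
  change 1 / 24 < 1 / 4 * E.backwardFactor i * (E.forwardFactor i / _)
  have hne_three : E.e (i + 1) = -1 → E.a (i + 1) ≠ 3 := fun he ha => h ⟨ha, he⟩
  have hden := E.one_add_e_mul_pos habar
  rcases E.half_le_backwardFactor_or habar with hA | ⟨n, rfl, ha, he⟩
  · have hB := E.one_add_e_mul_lt_three_mul_forwardFactor habar hne_three
    exact one_div_twentyfour_lt one_half_pos hA hden (by linarith)
  · have hfour : E.e (n + 1 + 1) = -1 → 4 ≤ E.a (n + 1 + 1) := fun he' => by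
      have := E.ha (n + 1 + 1) (by lia)
      have := E.a_succ_ne_two (by lia) ha he he'
      have := hne_three he'
      lia
    have hB := E.seven_mul_one_add_e_mul_lt habar (E.third_le_abar_of_a_eq_two ha) hfour
    exact one_div_twentyfour_lt (by norm_num) (E.two_sevenths_le_backwardFactor ha he) hden
      (by linarith)

/-- Lemma 7: for an adjusted nearest integer expansion, if `σ d_i^+ < 0`, `ᾱ_i < 1/2`
and not (`a_{i+1} = 3` with `ε_{i+1} = -1`), then `s_1(i), s_3(i) > 1/24` for `γ_*`. -/
theorem stmt14 (α : ℝ) (hirr : Irrational α) (h0 : 0 < α) (h12 : α < 1 / 2)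
    (E : ANIE α) (i : ℕ) (hi : 1 ≤ i)
    (σ : ℝ) (hσ : σ = 1 ∨ σ = -1)
    (hdp : σ * E.dplus i < 0) (habar : E.abar i < 1 / 2)
    (h : ¬(E.a (i + 1) = 3 ∧ E.e (i + 1) = -1)) :
    1 / 4 * (1 - E.abar i + σ * E.dminus i) *
        ((1 + (E.e (i + 1) : ℝ) * E.t i + σ * E.dplus i) /
          (1 + (E.e (i + 1) : ℝ) * E.abar i * E.t i)) > 1 / 24 :=
  stmt14_general E i σ hσ hdp habar h
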